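/- arXiv:2511.03618 — 3 statements merged into one kernel-verified Lean document; each statement's English description precedes it below -/
import Mathlib

section
/- (Almost sure convergence of linear TD with i.i.d. samples.) Let {S_t} determine an irreducible aperiodic finite Markov chain with transition matrix P_π and stationary distribution d_π. Consider linear TD driven by i.i.d. samples: at each step t, draw (S_{t,0}, S_{t,1}) independently with S_{t,0} ~ d_π and S_{t,1} ~ P_π(S_{t,0}, ·), and update w_{t+1} = w_t + α_t·(r_π(S_{t,0}) + γ·⟨x(S_{t,1}), w_t⟩ − ⟨x(S_{t,0}), w_t⟩)·x(S_{t,0}), where X has full column rank, γ ∈ [0,1), and {α_t} satisfies the Robbins–Monro condition. Then w_t → w* := −A⁻¹b almost surely, where A = Xᵀ D_π (γP_π − I) X and b = Xᵀ D_π r_π. -/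
/-!
The mean update direction is `A w + b`. Since `d` is stationary, `P` is nonexpansive in `L²(d)`, and
irreducibility makes `d` strictly positive; as `γ < 1` and `X` is injective, `A` is negative
definite: `⟪v, A v⟫ ≤ -c ‖v‖²` for some `c > 0`. In particular `A` is invertible and
`A w* + b = 0`.

Put `V_t = ‖w_t - w*‖²`. The sample drawn at time `t` is independent of the past and each update is
affine in `w_t`, so expanding the square gives
`E[V_{t+1} | past] ≤ (1 + 2 C² α_t²) V_t + 2 C² α_t² - 2 c α_t V_t`
for a growth constant `C`. By the Robbins–Siegmund theorem `V_t` converges almost surely and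
`∑ α_t V_t < ∞`; because `∑ α_t = ∞`, the limit of `V_t` can only be `0`.
-/

open Finset Matrix MeasureTheory Filter

/-- The set of return times of state `i` under the stochastic matrix `P`. -/
def returnTimes {S : Type*} [Fintype S] [DecidableEq S] (P : Matrix S S ℝ) (i : S) : Set ℕ :=
  {n | 1 ≤ n ∧ 0 < (P ^ n) i i}

section StochasticApproximation

open ProbabilityTheory
open scoped Topology RealInnerProductSpace

lemma eq_zero_of_tendsto_of_summable_mul {a u : ℕ → ℝ} {l : ℝ} (ha : ¬Summable a)
    (hu : Tendsto u atTop (𝓝 l)) (hau : Summable fun t => a t * u t) : l = 0 := by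
  by_contra hl
  have hne : ∀ᶠ t in atTop, u t ≠ 0 := hu.eventually_ne hl
  have hbound : (fun t => (a t * u t) * (u t)⁻¹) =O[atTop] fun t => a t * u t := by
    simpa using (Asymptotics.isBigO_refl (fun t => a t * u t) atTop).mul
      ((hu.inv₀ hl).isBigO_one ℝ)
  refine ha (summable_of_isBigO_nat hau (hbound.congr' ?_ .rfl))
  filter_upwards [hne] with t ht using mul_inv_cancel_right₀ ht _

variable {Ω : Type*} {mΩ : MeasurableSpace Ω} {μ : Measure Ω} {𝓕 : Filtration ℕ mΩ}

lemma condExp_div_const_le {f g : Ω → ℝ} {m : MeasurableSpace Ω} {a : ℝ} (ha : 0 ≤ a)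
    (hfg : μ[f | m] ≤ᵐ[μ] g) : μ[fun ω => f ω / a | m] ≤ᵐ[μ] fun ω => g ω / a := by
  have hsmul : μ[fun ω => f ω / a | m] =ᵐ[μ] a⁻¹ • μ[f | m] := by
    simpa [div_eq_inv_mul] using! condExp_smul a⁻¹ f m (μ := μ)
  filter_upwards [hsmul, hfg] with ω hω hle
  rw [hω, div_eq_inv_mul]
  exact mul_le_mul_of_nonneg_left hle (inv_nonneg.2 ha)

section Supermartingale

variable [IsFiniteMeasure μ]

lemma exists_ae_tendsto_of_supermartingale_of_nonneg {f : ℕ → Ω → ℝ} (hf : Supermartingale f 𝓕 μ)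
    (hf0 : ∀ t, 0 ≤ᵐ[μ] f t) : ∀ᵐ ω ∂μ, ∃ l, Tendsto (f · ω) atTop (𝓝 l) := by
  have hbdd : ∀ t, eLpNorm ((-f) t) 1 μ ≤ (∫ ω, f 0 ω ∂μ).toNNReal := fun t => by
    have hmean : ∫ ω, f t ω ∂μ ≤ ∫ ω, f 0 ω ∂μ := by
      simpa using hf.setIntegral_le (Nat.zero_le t) MeasurableSet.univ
    rw [Pi.neg_apply, eLpNorm_neg, eLpNorm_one_eq_lintegral_enorm,
      ← ofReal_integral_norm_eq_lintegral_enorm (hf.integrable t),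
      integral_congr_ae ((hf0 t).mono fun _ hω => Real.norm_of_nonneg hω)]
    exact ENNReal.ofReal_le_ofReal hmean
  filter_upwards [hf.neg.exists_ae_tendsto_of_bdd hbdd] with ω ⟨l, hl⟩
  exact ⟨-l, by simpa using hl.neg⟩

variable {V ζ : ℕ → Ω → ℝ}

lemma supermartingale_add_sum_add_tsum {ξ : ℕ → ℝ} (hV : StronglyAdapted 𝓕 V)
    (hVint : ∀ t, Integrable (V t) μ) (hζ : StronglyAdapted 𝓕 ζ)
    (hζint : ∀ t, Integrable (ζ t) μ) (hξ : Summable ξ)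
    (hdrift : ∀ t, μ[V (t + 1) | 𝓕 t] ≤ᵐ[μ] fun ω => V t ω + ξ t - ζ t ω) :
    Supermartingale (fun t ω => V t ω + (∑ k ∈ range t, ζ k ω + ∑' k, ξ (k + t))) 𝓕 μ := by
  have hsum : ∀ s t, s ≤ t + 1 →
      StronglyMeasurable[𝓕 t] fun ω => ∑ k ∈ range s, ζ k ω + ∑' k, ξ (k + s) := fun s t hst =>
    (Finset.stronglyMeasurable_fun_sum _ fun k hk => (hζ k).mono
      (𝓕.mono (by have := Finset.mem_range.1 hk; lia))).add stronglyMeasurable_const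
  have hsumint : ∀ t, Integrable (fun ω => ∑ k ∈ range t, ζ k ω + ∑' k, ξ (k + t)) μ := fun t =>
    (integrable_finsetSum _ fun k _ => hζint k).add (integrable_const _)
  refine supermartingale_nat (fun t => (hV t).add (hsum t t (Nat.le_succ t)))
    (fun t => (hVint t).add (hsumint t)) fun t => ?_
  have htail : ∑' k, ξ (k + t) = ξ t + ∑' k, ξ (k + (t + 1)) := by
    rw [((summable_nat_add_iff t).2 hξ).tsum_eq_zero_add]
    simp [add_right_comm, add_assoc]
  refine (condExp_add (hVint (t + 1)) (hsumint (t + 1)) _).trans_le ?_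
  rw [condExp_of_stronglyMeasurable (𝓕.le t) (hsum (t + 1) t le_rfl) (hsumint (t + 1))]
  filter_upwards [hdrift t] with ω hω
  simp only [Pi.add_apply, sum_range_succ, htail]
  linarith

lemma ae_tendsto_and_summable_of_condExp_le_add {ξ : ℕ → ℝ} (hV : StronglyAdapted 𝓕 V)
    (hVint : ∀ t, Integrable (V t) μ) (hV0 : ∀ t ω, 0 ≤ V t ω) (hζ : StronglyAdapted 𝓕 ζ)
    (hζint : ∀ t, Integrable (ζ t) μ) (hζ0 : ∀ t ω, 0 ≤ ζ t ω) (hξ : Summable ξ)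
    (hξ0 : ∀ t, 0 ≤ ξ t)
    (hdrift : ∀ t, μ[V (t + 1) | 𝓕 t] ≤ᵐ[μ] fun ω => V t ω + ξ t - ζ t ω) :
    ∀ᵐ ω ∂μ, (∃ l, Tendsto (V · ω) atTop (𝓝 l)) ∧ Summable (ζ · ω) := by
  have hconv := exists_ae_tendsto_of_supermartingale_of_nonneg
    (supermartingale_add_sum_add_tsum hV hVint hζ hζint hξ hdrift)
    fun t => ae_of_all _ fun ω => add_nonneg (hV0 t ω)
      (add_nonneg (sum_nonneg fun k _ => hζ0 k ω) (tsum_nonneg fun k => hξ0 (k + t)))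
  filter_upwards [hconv] with ω ⟨l, hl⟩
  have htotal : Tendsto (fun t => V t ω + ∑ k ∈ range t, ζ k ω) atTop (𝓝 l) := by
    simpa only [← add_assoc, add_sub_cancel_right, sub_zero] using hl.sub (tendsto_sum_nat_add ξ)
  obtain ⟨B, hB⟩ := htotal.bddAbove_range
  have hsummable : Summable (ζ · ω) := summable_of_sum_range_le (hζ0 · ω) fun t =>
    (le_add_of_nonneg_left (hV0 t ω)).trans (hB ⟨t, rfl⟩)
  exact ⟨⟨_, by simpa using htotal.sub hsummable.hasSum.tendsto_sum_nat⟩, hsummable⟩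

theorem ae_tendsto_and_summable_of_robbinsSiegmund {β ξ : ℕ → ℝ} (hV : StronglyAdapted 𝓕 V)
    (hVint : ∀ t, Integrable (V t) μ) (hV0 : ∀ t ω, 0 ≤ V t ω) (hζ : StronglyAdapted 𝓕 ζ)
    (hζint : ∀ t, Integrable (ζ t) μ) (hζ0 : ∀ t ω, 0 ≤ ζ t ω) (hβ : Summable β)
    (hβ0 : ∀ t, 0 ≤ β t) (hξ : Summable ξ) (hξ0 : ∀ t, 0 ≤ ξ t)
    (hdrift : ∀ t, μ[V (t + 1) | 𝓕 t] ≤ᵐ[μ] fun ω => (1 + β t) * V t ω + ξ t - ζ t ω) :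
    ∀ᵐ ω ∂μ, (∃ l, Tendsto (V · ω) atTop (𝓝 l)) ∧ Summable (ζ · ω) := by
  -- Dividing by `Q t = ∏_{k<t} (1 + β k)`, which converges, absorbs the factors `1 + β t`.
  set Q : ℕ → ℝ := fun t => ∏ k ∈ range t, (1 + β k)
  have hQ1 : ∀ t, 1 ≤ Q t := fun t =>
    Finset.one_le_prod fun k _ => le_add_of_nonneg_right (hβ0 k)
  have hQ0 : ∀ t, 0 < Q t := fun t => one_pos.trans_le (hQ1 t)
  have hQlim : Tendsto Q atTop (𝓝 (∏' k, (1 + β k))) :=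
    (multipliable_one_add_of_summable hβ.norm).hasProd.tendsto_prod_nat
  have hdriftQ : ∀ t, μ[fun ω => V (t + 1) ω / Q (t + 1) | 𝓕 t] ≤ᵐ[μ]
      fun ω => V t ω / Q t + ξ t / Q (t + 1) - ζ t ω / Q (t + 1) := fun t => by
    filter_upwards [condExp_div_const_le (hQ0 (t + 1)).le (hdrift t)] with ω hω
    have hβt : 1 + β t ≠ 0 := (add_pos_of_pos_of_nonneg one_pos (hβ0 t)).ne'
    have hratio : (1 + β t) * V t ω / Q (t + 1) = V t ω / Q t := by
      rw [show Q (t + 1) = Q t * (1 + β t) from prod_range_succ _ _, mul_comm (Q t),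
        mul_div_mul_left _ _ hβt]
    rwa [sub_div, add_div, hratio] at hω
  have hξQ : Summable fun t => ξ t / Q (t + 1) :=
    hξ.of_nonneg_of_le (fun t => div_nonneg (hξ0 t) (hQ0 _).le)
      fun t => div_le_self (hξ0 t) (hQ1 _)
  have hconv := ae_tendsto_and_summable_of_condExp_le_add
    (V := fun t ω => V t ω / Q t) (ζ := fun t ω => ζ t ω / Q (t + 1))
    (fun t => (hV t).div stronglyMeasurable_const) (fun t => (hVint t).div_const (Q t))
    (fun t ω => div_nonneg (hV0 t ω) (hQ0 t).le) (fun t => (hζ t).div stronglyMeasurable_const)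
    (fun t => (hζint t).div_const (Q (t + 1))) (fun t ω => div_nonneg (hζ0 t ω) (hQ0 _).le)
    hξQ (fun t => div_nonneg (hξ0 t) (hQ0 _).le) hdriftQ
  filter_upwards [hconv] with ω ⟨⟨l, hl⟩, hζQ⟩
  have hcancel : ∀ x t, x / Q t * Q t = x := fun x t => div_mul_cancel₀ x (hQ0 t).ne'
  refine ⟨⟨_, (hl.mul hQlim).congr fun t => hcancel _ _⟩, summable_of_isBigO_nat hζQ ?_⟩
  have hbound := (Asymptotics.isBigO_refl (fun t => ζ t ω / Q (t + 1)) atTop).mul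
    (((tendsto_add_atTop_iff_nat 1).2 hQlim).isBigO_one ℝ)
  simpa only [hcancel, mul_one] using hbound

end Supermartingale

section FiniteNoise

lemma eq_sum_indicator_preimage_singleton {α E M : Type*} [Fintype E] [AddCommMonoid M] (Y : α → E)
    (f : E → α → M) : (fun a => f (Y a) a) = ∑ y, (Y ⁻¹' {y}).indicator (f y) := by
  classical
  funext a
  simp [Finset.sum_apply, Set.indicator_apply]

variable {E : Type*} [MeasurableSpace E] [MeasurableSingletonClass E] {Y : Ω → E}

lemma stronglyMeasurable_apply_of_finite [Finite E] {F : Type*} [TopologicalSpace F]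
    [AddCommMonoid F] [ContinuousAdd F] {m : MeasurableSpace Ω} {f : E → Ω → F}
    (hY : Measurable[m] Y) (hf : ∀ y, StronglyMeasurable[m] (f y)) :
    StronglyMeasurable[m] fun ω => f (Y ω) ω := by
  cases nonempty_fintype E
  rw [eq_sum_indicator_preimage_singleton]
  exact Finset.stronglyMeasurable_sum _ fun y _ => (hf y).indicator (hY (measurableSet_singleton y))

lemma memLp_apply_of_finite [Finite E] {F : Type*} [NormedAddCommGroup F] {q : ENNReal}
    {f : E → Ω → F} (hY : Measurable Y) (hf : ∀ y, MemLp (f y) q μ) :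
    MemLp (fun ω => f (Y ω) ω) q μ := by
  cases nonempty_fintype E
  rw [eq_sum_indicator_preimage_singleton]
  exact memLp_finsetSum' _ fun y _ => (hf y).indicator (hY (measurableSet_singleton y))

lemma condExp_indicator_of_indep [IsFiniteMeasure μ] {m m' : MeasurableSpace Ω} (hm : m ≤ mΩ)
    (hm' : m' ≤ mΩ) (hind : Indep m' m μ) {f : Ω → ℝ} (hf : StronglyMeasurable[m] f)
    (hfint : Integrable f μ) {s : Set Ω} (hs : MeasurableSet[m'] s) :
    μ[s.indicator f | m] =ᵐ[μ] fun ω => μ.real s * f ω := by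
  have hmul : s.indicator f = f * s.indicator 1 := by
    ext ω; by_cases hω : ω ∈ s <;> simp [hω]
  have hone : μ[s.indicator (1 : Ω → ℝ) | m] =ᵐ[μ] fun _ => μ.real s := by
    refine (condExp_indep_eq hm' hm (stronglyMeasurable_one.indicator hs) hind).trans ?_
    rw [integral_indicator_one (hm' s hs)]
  have hpull : μ[f * s.indicator 1 | m] =ᵐ[μ] f * μ[s.indicator 1 | m] :=
    condExp_mul_of_stronglyMeasurable_left hf (hmul ▸ hfint.indicator (hm' s hs))
      ((integrable_const 1).indicator (hm' s hs))
  rw [hmul]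
  filter_upwards [hpull, hone] with ω hω hω'
  rw [hω, Pi.mul_apply, hω', mul_comm]

lemma condExp_apply_eq_sum_of_indep [Fintype E] [IsFiniteMeasure μ] {m : MeasurableSpace Ω}
    (hm : m ≤ mΩ) (hY : Measurable[mΩ] Y)
    (hind : Indep (MeasurableSpace.comap Y inferInstance) m μ)
    {f : E → Ω → ℝ} (hf : ∀ y, StronglyMeasurable[m] (f y)) (hfint : ∀ y, Integrable (f y) μ) :
    μ[fun ω => f (Y ω) ω | m] =ᵐ[μ] fun ω => ∑ y, μ.real (Y ⁻¹' {y}) * f y ω := by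
  have hYy : ∀ y, MeasurableSet[MeasurableSpace.comap Y inferInstance] (Y ⁻¹' {y}) := fun y =>
    ⟨{y}, measurableSet_singleton y, rfl⟩
  rw [eq_sum_indicator_preimage_singleton]
  refine (condExp_finsetSum (fun y _ => (hfint y).indicator (hY.comap_le _ (hYy y))) m).trans ?_
  filter_upwards [ae_all_iff.2 fun y =>
    condExp_indicator_of_indep hm hY.comap_le hind (hf y) (hfint y) (hYy y)] with ω hω
  simp only [Finset.sum_apply, hω]

end FiniteNoise

section PastFiltration

variable {E : Type*} [MeasurableSpace E] {Y : ℕ → Ω → E}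

/-- The σ-algebra `pastFiltration hY t` of the past strictly before time `t` of a process `Y`,
generated by `Y 0, …, Y (t - 1)`: the iterate at time `t` is adapted to it, whereas the sample `Y t`
used in the next update is not. -/
def pastFiltration (hY : ∀ t, Measurable (Y t)) : Filtration ℕ mΩ where
  seq t := ⨆ i ∈ Set.Iio t, MeasurableSpace.comap (Y i) inferInstance
  mono' _ _ hst := biSup_mono fun _ hi => hi.trans_le hst
  le' _ := iSup₂_le fun i _ => (hY i).comap_le

lemma measurable_pastFiltration_succ (hY : ∀ t, Measurable (Y t)) (t : ℕ) :
    Measurable[pastFiltration hY (t + 1)] (Y t) :=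
  measurable_iff_comap_le.2
    (le_iSup₂_of_le (f := fun i _ => MeasurableSpace.comap (Y i) _) t (Nat.lt_succ_self t) le_rfl)

lemma indep_comap_pastFiltration (hY : ∀ t, Measurable (Y t)) (hind : iIndepFun Y μ) (t : ℕ) :
    Indep (MeasurableSpace.comap (Y t) inferInstance) (pastFiltration hY t) μ := by
  simpa using! indep_iSup_of_disjoint (fun i => (hY i).comap_le) hind
    (S := {t}) (T := Set.Iio t) (by simp)

end PastFiltration

section RobbinsMonro

variable {E : Type*} {H : Type*} [NormedAddCommGroup H]

lemma memLp_comp_of_norm_le [IsFiniteMeasure μ] {q : ENNReal} {C : ℝ} {wstar : H}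
    {g : H → H} {u : Ω → H} (hg : Continuous g) (hgrowth : ∀ v, ‖g v‖ ≤ C * (1 + ‖v - wstar‖))
    (hu : MemLp u q μ) :
    MemLp (fun ω => g (u ω)) q μ := by
  have hbound : MemLp (fun ω => 1 + ‖u ω - wstar‖) q μ :=
    (memLp_const (1 : ℝ)).add (hu.sub (memLp_const wstar)).norm
  refine hbound.of_le_mul (hg.comp_aestronglyMeasurable hu.1) (c := C) (ae_of_all _ fun ω => ?_)
  rw [Real.norm_of_nonneg (by positivity)]
  exact hgrowth _

section Iterates

variable [MeasurableSpace E] [MeasurableSingletonClass E] [Finite E] [NormedSpace ℝ H]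
  {Y : ℕ → Ω → E} {h : E → H → H} {α : ℕ → ℝ} {w : ℕ → Ω → H}

lemma stronglyAdapted_of_robbinsMonro (hY : ∀ t, Measurable[𝓕 (t + 1)] (Y t))
    (hh : ∀ y, Continuous (h y)) (hw0 : StronglyMeasurable[𝓕 0] (w 0))
    (hw : ∀ t ω, w (t + 1) ω = w t ω + α t • h (Y t ω) (w t ω)) : StronglyAdapted 𝓕 w := by
  intro t
  induction t with
  | zero => exact hw0
  | succ t ih =>
    rw [funext (hw t)]
    have ih' := ih.mono (𝓕.mono (Nat.le_succ t))
    exact stronglyMeasurable_apply_of_finite (f := fun y ω => w t ω + α t • h y (w t ω)) (hY t)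
      fun y => ih'.add (((hh y).comp_stronglyMeasurable ih').const_smul _)

lemma memLp_of_robbinsMonro [IsFiniteMeasure μ] {q : ENNReal} {wstar : H} {C : ℝ}
    (hY : ∀ t, Measurable (Y t)) (hh : ∀ y, Continuous (h y))
    (hgrowth : ∀ y v, ‖h y v‖ ≤ C * (1 + ‖v - wstar‖)) (hw0 : MemLp (w 0) q μ)
    (hw : ∀ t ω, w (t + 1) ω = w t ω + α t • h (Y t ω) (w t ω)) : ∀ t, MemLp (w t) q μ := by
  intro t
  induction t with
  | zero => exact hw0
  | succ t ih =>
    rw [funext (hw t)]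
    exact memLp_apply_of_finite (f := fun y ω => w t ω + α t • h y (w t ω)) (hY t)
      fun y => ih.add ((memLp_comp_of_norm_le (hh y) (hgrowth y) ih).const_smul _)

end Iterates

variable [Fintype E] [InnerProductSpace ℝ H]

lemma sum_mul_norm_add_smul_sq_le {p : E → ℝ} {g : E → H} {u : H} {a c C : ℝ}
    (hp0 : ∀ y, 0 ≤ p y) (hp1 : ∑ y, p y = 1) (ha : 0 ≤ a) (hg : ∀ y, ‖g y‖ ≤ C * (1 + ‖u‖))
    (hdrift : ∑ y, p y * ⟪u, g y⟫ ≤ -c * ‖u‖ ^ 2) :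
    ∑ y, p y * ‖u + a • g y‖ ^ 2 ≤
      (1 + 2 * C ^ 2 * a ^ 2) * ‖u‖ ^ 2 + 2 * C ^ 2 * a ^ 2 - 2 * c * a * ‖u‖ ^ 2 := by
  have hexpand : ∀ y, p y * ‖u + a • g y‖ ^ 2 =
      p y * ‖u‖ ^ 2 + 2 * a * (p y * ⟪u, g y⟫) + a ^ 2 * (p y * ‖g y‖ ^ 2) := fun y => by
    rw [norm_add_sq_real, real_inner_smul_right, norm_smul, Real.norm_of_nonneg ha]
    ring
  have hgsq : ∀ y, ‖g y‖ ^ 2 ≤ 2 * C ^ 2 * (1 + ‖u‖ ^ 2) := fun y =>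
    calc ‖g y‖ ^ 2 ≤ C ^ 2 * (1 + ‖u‖) ^ 2 := by
          rw [← mul_pow]; exact pow_le_pow_left₀ (norm_nonneg _) (hg y) 2
      _ ≤ C ^ 2 * (2 * (1 ^ 2 + ‖u‖ ^ 2)) := mul_le_mul_of_nonneg_left add_sq_le (sq_nonneg C)
      _ = 2 * C ^ 2 * (1 + ‖u‖ ^ 2) := by ring
  have hmeansq : ∑ y, p y * ‖g y‖ ^ 2 ≤ 2 * C ^ 2 * (1 + ‖u‖ ^ 2) :=
    calc ∑ y, p y * ‖g y‖ ^ 2 ≤ ∑ y, p y * (2 * C ^ 2 * (1 + ‖u‖ ^ 2)) :=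
          sum_le_sum fun y _ => mul_le_mul_of_nonneg_left (hgsq y) (hp0 y)
      _ = 2 * C ^ 2 * (1 + ‖u‖ ^ 2) := by rw [← sum_mul, hp1, one_mul]
  calc ∑ y, p y * ‖u + a • g y‖ ^ 2
      = ‖u‖ ^ 2 + 2 * a * ∑ y, p y * ⟪u, g y⟫ + a ^ 2 * ∑ y, p y * ‖g y‖ ^ 2 := by
        simp only [hexpand, sum_add_distrib, ← mul_sum, ← sum_mul, hp1, one_mul]
    _ ≤ ‖u‖ ^ 2 + 2 * a * (-c * ‖u‖ ^ 2) + a ^ 2 * (2 * C ^ 2 * (1 + ‖u‖ ^ 2)) := by gcongr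
    _ = _ := by ring

variable [MeasurableSpace E] [MeasurableSingletonClass E] [IsProbabilityMeasure μ]
  {h : E → H → H} {wstar : H} {c C : ℝ}

lemma condExp_norm_sub_sq_le_of_robbinsMonro {a : ℝ} {Z : Ω → E} {m : MeasurableSpace Ω}
    (hm : m ≤ mΩ) (hZ : Measurable[mΩ] Z)
    (hind : Indep (MeasurableSpace.comap Z inferInstance) m μ) (hh : ∀ y, Continuous (h y))
    (hgrowth : ∀ y v, ‖h y v‖ ≤ C * (1 + ‖v - wstar‖))
    (hdrift : ∀ v, ∑ y, μ.real (Z ⁻¹' {y}) * ⟪v - wstar, h y v⟫ ≤ -c * ‖v - wstar‖ ^ 2)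
    (ha : 0 ≤ a) {u : Ω → H} (hu : StronglyMeasurable[m] u) (hu2 : MemLp u 2 μ) :
    μ[fun ω => ‖u ω + a • h (Z ω) (u ω) - wstar‖ ^ 2 | m] ≤ᵐ[μ] fun ω =>
      (1 + 2 * C ^ 2 * a ^ 2) * ‖u ω - wstar‖ ^ 2 + 2 * C ^ 2 * a ^ 2
        - 2 * c * a * ‖u ω - wstar‖ ^ 2 := by
  have hmeas : ∀ y, StronglyMeasurable[m] fun ω => ‖u ω + a • h y (u ω) - wstar‖ ^ 2 := fun y =>
    ((hu.add (((hh y).comp_stronglyMeasurable hu).const_smul a)).sub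
      stronglyMeasurable_const).norm.pow 2
  have hint : ∀ y, Integrable (fun ω => ‖u ω + a • h y (u ω) - wstar‖ ^ 2) μ := fun y =>
    ((hu2.add ((memLp_comp_of_norm_le (hh y) (hgrowth y) hu2).const_smul a)).sub
      (memLp_const wstar)).norm.integrable_sq
  have havg := condExp_apply_eq_sum_of_indep hm hZ hind hmeas hint
  refine havg.trans_le (ae_of_all _ fun ω => ?_)
  have hsum : ∑ y, μ.real (Z ⁻¹' {y}) = 1 := by
    simpa using sum_measureReal_preimage_singleton (μ := μ) univ
      fun y _ => hZ (measurableSet_singleton y)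
  have hstep := sum_mul_norm_add_smul_sq_le (p := fun y => μ.real (Z ⁻¹' {y}))
    (g := fun y => h y (u ω)) (fun _ => measureReal_nonneg) hsum ha (fun y => hgrowth y (u ω))
    (hdrift (u ω))
  simpa only [add_sub_right_comm] using hstep

theorem ae_tendsto_of_robbinsMonro {Y : ℕ → Ω → E} {α : ℕ → ℝ} {w : ℕ → Ω → H}
    (hY : ∀ t, Measurable[𝓕 (t + 1)] (Y t))
    (hind : ∀ t, Indep (MeasurableSpace.comap (Y t) inferInstance) (𝓕 t) μ)
    (hh : ∀ y, Continuous (h y)) (hgrowth : ∀ y v, ‖h y v‖ ≤ C * (1 + ‖v - wstar‖)) (hc : 0 < c)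
    (hdrift : ∀ t v, ∑ y, μ.real (Y t ⁻¹' {y}) * ⟪v - wstar, h y v⟫ ≤ -c * ‖v - wstar‖ ^ 2)
    (hα0 : ∀ t, 0 ≤ α t) (hα : ¬Summable α) (hαsq : Summable fun t => α t ^ 2)
    (hw0 : StronglyMeasurable[𝓕 0] (w 0)) (hw02 : MemLp (w 0) 2 μ)
    (hw : ∀ t ω, w (t + 1) ω = w t ω + α t • h (Y t ω) (w t ω)) :
    ∀ᵐ ω ∂μ, Tendsto (w · ω) atTop (𝓝 wstar) := by
  have hYm : ∀ t, Measurable (Y t) := fun t => (hY t).mono (𝓕.le _) le_rfl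
  have hadapted : StronglyAdapted 𝓕 w := stronglyAdapted_of_robbinsMonro hY hh hw0 hw
  have hmemLp : ∀ t, MemLp (w t) 2 μ := memLp_of_robbinsMonro hYm hh hgrowth hw02 hw
  have hVadapted : StronglyAdapted 𝓕 fun t ω => ‖w t ω - wstar‖ ^ 2 := fun t =>
    ((hadapted t).sub stronglyMeasurable_const).norm.pow 2
  have hVint : ∀ t, Integrable (fun ω => ‖w t ω - wstar‖ ^ 2) μ := fun t =>
    ((hmemLp t).sub (memLp_const wstar)).norm.integrable_sq
  have hVdrift : ∀ t, μ[fun ω => ‖w (t + 1) ω - wstar‖ ^ 2 | 𝓕 t] ≤ᵐ[μ] fun ω =>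
      (1 + 2 * C ^ 2 * α t ^ 2) * ‖w t ω - wstar‖ ^ 2 + 2 * C ^ 2 * α t ^ 2
        - 2 * c * α t * ‖w t ω - wstar‖ ^ 2 := fun t => by
    simpa only [hw] using condExp_norm_sub_sq_le_of_robbinsMonro (𝓕.le t) (hYm t) (hind t) hh
      hgrowth (hdrift t) (hα0 t) (hadapted t) (hmemLp t)
  have hnoise := hαsq.mul_left (2 * C ^ 2)
  have hnoise0 : ∀ t, 0 ≤ 2 * C ^ 2 * α t ^ 2 := fun t => by positivity
  have hgain0 : ∀ t, 0 ≤ 2 * c * α t := fun t => mul_nonneg (by positivity) (hα0 t)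
  filter_upwards [ae_tendsto_and_summable_of_robbinsSiegmund hVadapted hVint
    (fun t ω => sq_nonneg _) (fun t => (hVadapted t).const_mul (2 * c * α t))
    (fun t => (hVint t).const_mul (2 * c * α t))
    (fun t ω => mul_nonneg (hgain0 t) (sq_nonneg _)) hnoise hnoise0 hnoise hnoise0 hVdrift]
    with ω ⟨⟨l, hl⟩, hsummable⟩
  have hgain : ¬Summable fun t => 2 * c * α t := by
    rwa [summable_mul_left_iff (by positivity)]
  obtain rfl := eq_zero_of_tendsto_of_summable_mul hgain hl hsummable
  refine tendsto_iff_norm_sub_tendsto_zero.2 ?_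
  simpa using hl.sqrt

end RobbinsMonro

section LinearRecursion

variable {H : Type*} [NormedAddCommGroup H] [InnerProductSpace ℝ H]

lemma exists_pos_inner_map_le_neg_mul_norm_sq [FiniteDimensional ℝ H] {A : H →L[ℝ] H}
    (hA : ∀ v, v ≠ 0 → ⟪v, A v⟫ < 0) : ∃ c > 0, ∀ v, ⟪v, A v⟫ ≤ -c * ‖v‖ ^ 2 := by
  have hsphere : ∀ v ∈ Metric.sphere (0 : H) 1, 0 < -⟪v, A v⟫ := fun v hv =>
    neg_pos.2 (hA v (ne_zero_of_mem_unit_sphere ⟨v, hv⟩))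
  obtain ⟨c, hc, hcA⟩ := (isCompact_sphere (0 : H) 1).exists_forall_le'
    (f := fun v => -⟪v, A v⟫) (by fun_prop) hsphere
  refine ⟨c, hc, fun v => ?_⟩
  rcases eq_or_ne v 0 with rfl | hv
  · simp
  have hunit : ⟪v, A v⟫ = ‖v‖ ^ 2 * ⟪‖v‖⁻¹ • v, A (‖v‖⁻¹ • v)⟫ := by
    have := norm_ne_zero_iff.2 hv
    rw [map_smul, real_inner_smul_left, real_inner_smul_right]
    field_simp
  have hle := hcA (‖v‖⁻¹ • v) (by simp [norm_smul, hv])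
  rw [hunit]
  nlinarith [sq_nonneg ‖v‖]

lemma norm_map_add_le_mul_one_add_norm_sub (A : H →L[ℝ] H) (b v v₀ : H) :
    ‖A v + b‖ ≤ (‖A‖ + ‖A v₀ + b‖) * (1 + ‖v - v₀‖) :=
  calc ‖A v + b‖ = ‖A (v - v₀) + (A v₀ + b)‖ := by rw [map_sub]; abel_nf
    _ ≤ ‖A‖ * ‖v - v₀‖ + ‖A v₀ + b‖ := (norm_add_le _ _).trans (by gcongr; exact A.le_opNorm _)
    _ ≤ (‖A‖ + ‖A v₀ + b‖) * (1 + ‖v - v₀‖) := by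
      nlinarith [norm_nonneg A, mul_nonneg (norm_nonneg (A v₀ + b)) (norm_nonneg (v - v₀))]

theorem ae_tendsto_of_linear_stochasticApproximation [FiniteDimensional ℝ H] {E : Type*}
    [Fintype E] [MeasurableSpace E] [MeasurableSingletonClass E] [IsProbabilityMeasure μ]
    {Y : ℕ → Ω → E} (hY : ∀ t, Measurable (Y t)) (hind : iIndepFun Y μ) {p : E → ℝ}
    (hp : ∀ t y, μ.real (Y t ⁻¹' {y}) = p y) {A : E → H →L[ℝ] H} {b : E → H}
    (hA : ∀ v, v ≠ 0 → ⟪v, (∑ y, p y • A y) v⟫ < 0) {wstar : H}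
    (hwstar : (∑ y, p y • A y) wstar + ∑ y, p y • b y = 0) {α : ℕ → ℝ} (hα0 : ∀ t, 0 ≤ α t)
    (hα : ¬Summable α) (hαsq : Summable fun t => α t ^ 2) {w₀ : H} {w : ℕ → Ω → H}
    (hw0 : ∀ ω, w 0 ω = w₀)
    (hw : ∀ t ω, w (t + 1) ω = w t ω + α t • (A (Y t ω) (w t ω) + b (Y t ω))) :
    ∀ᵐ ω ∂μ, Tendsto (w · ω) atTop (𝓝 wstar) := by
  obtain ⟨c, hc, hAc⟩ := exists_pos_inner_map_le_neg_mul_norm_sq hA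
  have hdrift : ∀ t v, ∑ y, μ.real (Y t ⁻¹' {y}) * ⟪v - wstar, A y v + b y⟫ ≤
      -c * ‖v - wstar‖ ^ 2 := fun t v =>
    calc ∑ y, μ.real (Y t ⁻¹' {y}) * ⟪v - wstar, A y v + b y⟫
        = ⟪v - wstar, (∑ y, p y • A y) v + ∑ y, p y • b y⟫ := by
          simp only [hp, _root_.sum_apply, _root_.smul_apply,
            ← sum_add_distrib, ← smul_add, inner_sum, real_inner_smul_right]
      _ = ⟪v - wstar, (∑ y, p y • A y) (v - wstar)⟫ := by
          rw [map_sub, eq_neg_of_add_eq_zero_right hwstar, ← sub_eq_add_neg]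
      _ ≤ -c * ‖v - wstar‖ ^ 2 := hAc _
  have hgrowth : ∀ y v, ‖A y v + b y‖ ≤
      (∑ y, (‖A y‖ + ‖A y wstar + b y‖)) * (1 + ‖v - wstar‖) := fun y v =>
    (norm_map_add_le_mul_one_add_norm_sub (A y) (b y) v wstar).trans <| by
      gcongr
      exact single_le_sum (f := fun y => ‖A y‖ + ‖A y wstar + b y‖)
        (fun _ _ => by positivity) (mem_univ y)
  have hw0' : w 0 = fun _ => w₀ := funext hw0
  exact ae_tendsto_of_robbinsMonro (h := fun y v => A y v + b y)
    (measurable_pastFiltration_succ hY) (indep_comap_pastFiltration hY hind) (by fun_prop) hgrowth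
    hc hdrift hα0 hα hαsq (hw0' ▸ stronglyMeasurable_const) (hw0' ▸ memLp_const w₀) hw

end LinearRecursion

end StochasticApproximation

section TemporalDifference

variable {S : Type*} [Fintype S] [DecidableEq S] {P : Matrix S S ℝ} {d : S → ℝ}

section Stationary

lemma vecMul_pow_eq_of_vecMul_eq (hd : d ᵥ* P = d) (n : ℕ) : d ᵥ* P ^ n = d := by
  induction n with
  | zero => simp
  | succ n ih => rw [pow_succ, ← vecMul_vecMul, ih, hd]

lemma stationary_pos_of_irreducible (hP : P ∈ rowStochastic ℝ S)
    (hirr : ∀ i j, ∃ n : ℕ, 0 < (P ^ n) i j) (hd0 : ∀ s, 0 ≤ d s) (hd1 : ∑ s, d s = 1)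
    (hd : d ᵥ* P = d) (s : S) : 0 < d s := by
  obtain ⟨i, -, hi⟩ := exists_ne_zero_of_sum_ne_zero (hd1.trans_ne one_ne_zero)
  obtain ⟨n, hn⟩ := hirr i s
  calc 0 < d i * (P ^ n) i s := mul_pos ((hd0 i).lt_of_ne' hi) hn
    _ ≤ ∑ j, d j * (P ^ n) j s := single_le_sum (f := fun j => d j * (P ^ n) j s)
        (fun j _ => mul_nonneg (hd0 j) (nonneg_of_mem_rowStochastic (pow_mem hP n))) (mem_univ i)
    _ = d s := congrFun (vecMul_pow_eq_of_vecMul_eq hd n) s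

lemma abs_sum_mul_mulVec_le_sum_mul_sq (hP : P ∈ rowStochastic ℝ S) (hd0 : ∀ s, 0 ≤ d s)
    (hd : d ᵥ* P = d) (u : S → ℝ) : |∑ s, d s * (u s * (P *ᵥ u) s)| ≤ ∑ s, d s * u s ^ 2 := by
  have hP0 : ∀ s s', 0 ≤ P s s' := fun _ _ => nonneg_of_mem_rowStochastic hP
  have hrow : ∑ s, ∑ s', d s * P s s' * u s ^ 2 = ∑ s, d s * u s ^ 2 := by
    simp only [← sum_mul, ← mul_sum, sum_row_of_mem_rowStochastic hP, mul_one]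
  have hcol : ∑ s, ∑ s', d s * P s s' * u s' ^ 2 = ∑ s, d s * u s ^ 2 := by
    rw [sum_comm]
    simp only [← sum_mul]
    exact sum_congr rfl fun s _ => congrArg (· * u s ^ 2) (congrFun hd s)
  calc |∑ s, d s * (u s * (P *ᵥ u) s)|
      = |∑ s, ∑ s', d s * P s s' * (u s * u s')| := by
        simp only [mulVec, dotProduct, mul_sum]
        exact congrArg _ (sum_congr rfl fun _ _ => sum_congr rfl fun _ _ => by ring)
    _ ≤ ∑ s, ∑ s', d s * P s s' * |u s * u s'| := by
        refine (abs_sum_le_sum_abs _ _).trans (sum_le_sum fun s _ => ?_)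
        refine (abs_sum_le_sum_abs _ _).trans (sum_le_sum fun s' _ => ?_)
        rw [abs_mul, abs_of_nonneg (mul_nonneg (hd0 s) (hP0 s s'))]
    _ ≤ ∑ s, ∑ s', d s * P s s' * ((u s ^ 2 + u s' ^ 2) / 2) := by
        gcongr with s _ s' _
        · exact mul_nonneg (hd0 s) (hP0 s s')
        · rw [abs_mul, ← sq_abs (u s), ← sq_abs (u s')]
          linarith [two_mul_le_add_sq |u s| |u s'|]
    _ = (∑ s, ∑ s', d s * P s s' * u s ^ 2 + ∑ s, ∑ s', d s * P s s' * u s' ^ 2) / 2 := by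
        simp only [← mul_div_assoc, ← sum_div, mul_add, sum_add_distrib]
    _ = ∑ s, d s * u s ^ 2 := by rw [hrow, hcol]; ring

end Stationary

variable {ι : Type*} {X : Matrix S ι ℝ} {γ : ℝ}

/-- The matrix `A = Xᵀ D (γ P - I) X` of the linear system `A w + b = 0` satisfied by the TD fixed
point, for features `X`, transition matrix `P`, state weights `d` and discount `γ`. -/
def tdMatrix (X : Matrix S ι ℝ) (P : Matrix S S ℝ) (d : S → ℝ) (γ : ℝ) : Matrix ι ι ℝ :=
  Xᵀ * diagonal d * (γ • P - 1) * X

/-- The vector `b = Xᵀ D r` of the linear system `A w + b = 0` satisfied by the TD fixed point. -/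
def tdVector (X : Matrix S ι ℝ) (d r : S → ℝ) : ι → ℝ :=
  (Xᵀ * diagonal d) *ᵥ r

lemma sum_smul_vecMulVec_eq_tdMatrix (hP : P ∈ rowStochastic ℝ S) :
    ∑ y : S × S, (d y.1 * P y.1 y.2) • vecMulVec (X y.1) (γ • X y.2 - X y.1) =
      tdMatrix X P d γ := by
  ext k l
  have hrow : ∀ s, ((γ • P - 1) * X : Matrix S ι ℝ) s l =
      ∑ s', P s s' * (γ * X s' l - X s l) := fun s => by
    rw [Matrix.sub_mul, Matrix.smul_mul, Matrix.one_mul]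
    simp only [mul_sub, sum_sub_distrib, ← sum_mul, sum_row_of_mem_rowStochastic hP, one_mul,
      Matrix.sub_apply, Matrix.smul_apply, Matrix.mul_apply, smul_eq_mul, mul_sum, mul_left_comm]
  rw [tdMatrix, Matrix.mul_assoc, Matrix.mul_apply, Matrix.sum_apply, Fintype.sum_prod_type]
  simp only [hrow, mul_diagonal, transpose_apply, Matrix.smul_apply, vecMulVec_apply, smul_eq_mul,
    Pi.sub_apply, Pi.smul_apply, mul_sum]
  exact sum_congr rfl fun _ _ => sum_congr rfl fun _ _ => by ring

lemma sum_smul_eq_tdVector (hP : P ∈ rowStochastic ℝ S) (r : S → ℝ) :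
    ∑ y : S × S, (d y.1 * P y.1 y.2) • r y.1 • X y.1 = tdVector X d r := by
  ext k
  simp only [tdVector, mulVec, dotProduct, mul_diagonal, transpose_apply, Fintype.sum_prod_type,
    Finset.sum_apply, Pi.smul_apply, smul_eq_mul, ← sum_mul, ← mul_sum,
    sum_row_of_mem_rowStochastic hP]
  exact sum_congr rfl fun _ _ => by ring

variable [Fintype ι]

lemma dotProduct_tdMatrix_mulVec (v : ι → ℝ) : v ⬝ᵥ tdMatrix X P d γ *ᵥ v =
    γ * ∑ s, d s * ((X *ᵥ v) s * (P *ᵥ X *ᵥ v) s) - ∑ s, d s * (X *ᵥ v) s ^ 2 := by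
  have hform : v ⬝ᵥ tdMatrix X P d γ *ᵥ v =
      (X *ᵥ v) ⬝ᵥ diagonal d *ᵥ (γ • P *ᵥ X *ᵥ v - X *ᵥ v) := by
    rw [tdMatrix, Matrix.mul_assoc, Matrix.mul_assoc, ← mulVec_mulVec, dotProduct_mulVec,
      vecMul_transpose, ← mulVec_mulVec, ← mulVec_mulVec, sub_mulVec, smul_mulVec, one_mulVec]
  rw [hform]
  simp only [dotProduct, mulVec_diagonal, Pi.sub_apply, Pi.smul_apply, smul_eq_mul, mul_sum,
    ← sum_sub_distrib]
  exact sum_congr rfl fun _ _ => by ring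

lemma dotProduct_tdMatrix_mulVec_neg (hP : P ∈ rowStochastic ℝ S) (hd0 : ∀ s, 0 < d s)
    (hd : d ᵥ* P = d) (hX : Function.Injective X.mulVec) (hγ : |γ| < 1) {v : ι → ℝ} (hv : v ≠ 0) :
    v ⬝ᵥ tdMatrix X P d γ *ᵥ v < 0 := by
  have hu : X *ᵥ v ≠ 0 := (hX.ne hv).trans_eq (mulVec_zero X)
  obtain ⟨s, hs⟩ := Function.ne_iff.1 hu
  have hnorm : 0 < ∑ s, d s * (X *ᵥ v) s ^ 2 :=
    sum_pos' (fun s _ => mul_nonneg (hd0 s).le (sq_nonneg _))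
      ⟨s, mem_univ s, mul_pos (hd0 s) (sq_pos_iff.2 hs)⟩
  have hcross : γ * ∑ s, d s * ((X *ᵥ v) s * (P *ᵥ X *ᵥ v) s) ≤
      |γ| * ∑ s, d s * (X *ᵥ v) s ^ 2 :=
    (le_abs_self _).trans <| (abs_mul _ _).trans_le <| mul_le_mul_of_nonneg_left
      (abs_sum_mul_mulVec_le_sum_mul_sq hP (fun s => (hd0 s).le) hd _) (abs_nonneg γ)
  rw [dotProduct_tdMatrix_mulVec]
  nlinarith

lemma tdMatrix_mulVec_neg_inv_mulVec_add [DecidableEq ι] (hP : P ∈ rowStochastic ℝ S)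
    (hd0 : ∀ s, 0 < d s) (hd : d ᵥ* P = d) (hX : Function.Injective X.mulVec) (hγ : |γ| < 1)
    (b : ι → ℝ) : tdMatrix X P d γ *ᵥ (-((tdMatrix X P d γ)⁻¹ *ᵥ b)) + b = 0 := by
  have hinj : Function.Injective (tdMatrix X P d γ).mulVec := by
    refine (injective_iff_map_eq_zero (tdMatrix X P d γ).mulVecLin).2 fun v hv => ?_
    by_contra hv0
    have hneg := dotProduct_tdMatrix_mulVec_neg hP hd0 hd hX hγ hv0
    rw [← mulVecLin_apply, hv, dotProduct_zero] at hneg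
    exact lt_irrefl 0 hneg
  have hdet := (isUnit_iff_isUnit_det _).1 (mulVec_injective_iff_isUnit.1 hinj)
  rw [mulVec_neg, mulVec_mulVec, mul_nonsing_inv _ hdet, one_mulVec, neg_add_cancel]

end TemporalDifference

section CylinderMeasure

open ProbabilityTheory

variable {E : Type*} [Countable E] [MeasurableSpace E] [MeasurableSingletonClass E]
  {μ : Measure (ℕ → E)}

lemma eq_infinitePi_of_cylinder {ν : Measure E} [IsProbabilityMeasure ν]
    (hμ : ∀ (n : ℕ) (ys : ℕ → E),
      μ {ω | ∀ i ≤ n, ω i = ys i} = ∏ i ∈ range (n + 1), ν {ys i}) :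
    μ = Measure.infinitePi fun _ => ν := by
  have hproj : IsProjectiveLimit μ fun I : Finset ℕ => Measure.pi fun _ : I => ν := by
    refine (isProjectiveLimit_nat_iff (isProjectiveMeasureFamily_pi fun _ => ν) μ).2 fun n => ?_
    refine Measure.ext_of_singleton fun y => ?_
    obtain ⟨ys, rfl⟩ : ∃ ys : ℕ → E, Preorder.frestrictLe (π := fun _ => E) n ys = y :=
      ⟨fun i => y ⟨min i n, by simp⟩, funext fun i => by
        simp [min_eq_left (mem_Iic.1 i.2)]⟩
    have hpre : Preorder.frestrictLe (π := fun _ => E) n ⁻¹' {Preorder.frestrictLe n ys} =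
        {ω | ∀ i ≤ n, ω i = ys i} := by
      ext ω
      simp [funext_iff]
    rw [Measure.map_apply (by fun_prop) (measurableSet_singleton _), hpre, hμ,
      Measure.pi_singleton, Nat.range_succ_eq_Iic]
    exact (prod_coe_sort (Iic n) fun i => ν {ys i}).symm
  exact hproj.unique (Measure.isProjectiveLimit_infinitePi fun _ => ν)

lemma exists_eq_infinitePi_of_cylinder [IsProbabilityMeasure μ] {p : E → ℝ} (hp : ∀ y, 0 ≤ p y)
    (hμ : ∀ (n : ℕ) (ys : ℕ → E), μ {ω | ∀ i ≤ n, ω i = ys i} =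
      ENNReal.ofReal (∏ i ∈ range (n + 1), p (ys i))) :
    ∃ ν : Measure E, IsProbabilityMeasure ν ∧ (∀ y, ν.real {y} = p y) ∧
      μ = Measure.infinitePi fun _ => ν := by
  have hν : ∀ y, μ.map (· 0) {y} = ENNReal.ofReal (p y) := fun y => by
    rw [Measure.map_apply (by fun_prop) (measurableSet_singleton y)]
    simpa [Set.preimage] using hμ 0 fun _ => y
  have : IsProbabilityMeasure (μ.map (· 0)) := Measure.isProbabilityMeasure_map
    (measurable_pi_apply 0).aemeasurable
  refine ⟨μ.map (· 0), this, fun y => ?_, eq_infinitePi_of_cylinder fun n ys => ?_⟩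
  · rw [measureReal_def, hν, ENNReal.toReal_ofReal (hp y)]
  · simp only [hμ, hν, ENNReal.ofReal_prod_of_nonneg fun i _ => hp (ys i)]

lemma iIndepFun_eval_of_cylinder [IsProbabilityMeasure μ] {p : E → ℝ} (hp : ∀ y, 0 ≤ p y)
    (hμ : ∀ (n : ℕ) (ys : ℕ → E), μ {ω | ∀ i ≤ n, ω i = ys i} =
      ENNReal.ofReal (∏ i ∈ range (n + 1), p (ys i))) :
    iIndepFun (fun t ω => ω t) μ := by
  obtain ⟨ν, _, -, rfl⟩ := exists_eq_infinitePi_of_cylinder hp hμ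
  exact iIndepFun_infinitePi (P := fun _ => ν) (X := fun _ y => y) fun _ => measurable_id

lemma measureReal_eval_preimage_singleton_of_cylinder [IsProbabilityMeasure μ] {p : E → ℝ}
    (hp : ∀ y, 0 ≤ p y)
    (hμ : ∀ (n : ℕ) (ys : ℕ → E), μ {ω | ∀ i ≤ n, ω i = ys i} =
      ENNReal.ofReal (∏ i ∈ range (n + 1), p (ys i)))
    (t : ℕ) (y : E) : μ.real ((· t) ⁻¹' {y}) = p y := by
  obtain ⟨ν, _, hν, rfl⟩ := exists_eq_infinitePi_of_cylinder hp hμ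
  exact ((measurePreserving_eval_infinitePi (fun _ => ν) t).measureReal_preimage
    (measurableSet_singleton y).nullMeasurableSet).trans (hν y)

end CylinderMeasure

section AlmostSureConvergence

open ProbabilityTheory
open scoped Topology RealInnerProductSpace

lemma vecMulVec_sub_mulVec_add_smul {ι : Type*} [Fintype ι] (x x' v : ι → ℝ) (γ ρ : ℝ) :
    vecMulVec x (γ • x' - x) *ᵥ v + ρ • x = (ρ + γ * x' ⬝ᵥ v - x ⬝ᵥ v) • x := by
  rw [vecMulVec_mulVec, op_smul_eq_smul, ← add_smul, sub_dotProduct, smul_dotProduct, smul_eq_mul]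
  congr 1
  ring

theorem ae_tendsto_of_linearTD_iid_general {S ι Ω : Type*} [Fintype S] [DecidableEq S]
    [MeasurableSpace S] [MeasurableSingletonClass S] [Fintype ι] [DecidableEq ι]
    {mΩ : MeasurableSpace Ω} {μ : Measure Ω} [IsProbabilityMeasure μ]
    {P : Matrix S S ℝ} (hP : P ∈ rowStochastic ℝ S)
    {d : S → ℝ} (hd0 : ∀ s, 0 < d s) (hd : d ᵥ* P = d)
    {X : Matrix S ι ℝ} (hX : Function.Injective X.mulVec) (r : S → ℝ) {γ : ℝ} (hγ : |γ| < 1)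
    {α : ℕ → ℝ} (hα0 : ∀ t, 0 ≤ α t) (hα : ¬Summable α) (hαsq : Summable fun t => α t ^ 2)
    {Y : ℕ → Ω → S × S} (hY : ∀ t, Measurable (Y t)) (hind : iIndepFun Y μ)
    (hlaw : ∀ t y, μ.real (Y t ⁻¹' {y}) = d y.1 * P y.1 y.2)
    {w₀ : ι → ℝ} {w : ℕ → Ω → ι → ℝ} (hw0 : ∀ ω, w 0 ω = w₀)
    (hw : ∀ t ω, w (t + 1) ω = w t ω +
      (α t * (r (Y t ω).1 + γ * X (Y t ω).2 ⬝ᵥ w t ω - X (Y t ω).1 ⬝ᵥ w t ω)) • X (Y t ω).1) :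
    ∀ᵐ ω ∂μ, Tendsto (w · ω) atTop
      (𝓝 (-((tdMatrix X P d γ)⁻¹ *ᵥ tdVector X d r))) := by
  let A (y : S × S) : EuclideanSpace ℝ ι →L[ℝ] EuclideanSpace ℝ ι :=
    toEuclideanCLM (𝕜 := ℝ) (vecMulVec (X y.1) (γ • X y.2 - X y.1))
  let b (y : S × S) : EuclideanSpace ℝ ι := WithLp.toLp 2 (r y.1 • X y.1)
  have hAmean : ∑ y : S × S, (d y.1 * P y.1 y.2) • A y =
      toEuclideanCLM (𝕜 := ℝ) (tdMatrix X P d γ) := by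
    simp only [A, ← map_smul, ← map_sum, sum_smul_vecMulVec_eq_tdMatrix hP]
  have hbmean : ∑ y : S × S, (d y.1 * P y.1 y.2) • b y = WithLp.toLp 2 (tdVector X d r) := by
    simp only [b, ← WithLp.toLp_smul, ← WithLp.toLp_sum, sum_smul_eq_tdVector hP]
  have hconv := ae_tendsto_of_linear_stochasticApproximation hY hind hlaw (A := A) (b := b)
    (wstar := WithLp.toLp 2 (-((tdMatrix X P d γ)⁻¹ *ᵥ tdVector X d r)))
    (w₀ := WithLp.toLp 2 w₀) (w := fun t ω => WithLp.toLp 2 (w t ω))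
    (fun v hv => ?_) ?_ hα0 hα hαsq (fun ω => by rw [hw0]) fun t ω => ?_
  · filter_upwards [hconv] with ω hω
    exact ((PiLp.continuous_ofLp 2 _).tendsto _).comp hω
  · rw [hAmean, inner_toEuclideanCLM]
    exact dotProduct_tdMatrix_mulVec_neg hP hd0 hd hX hγ ((WithLp.ofLp_eq_zero 2).not.2 hv)
  · rw [hAmean, hbmean, toEuclideanCLM_toLp, ← WithLp.toLp_add,
      tdMatrix_mulVec_neg_inv_mulVec_add hP hd0 hd hX hγ, WithLp.toLp_zero]
  · rw [hw]
    simp only [A, b, toEuclideanCLM_toLp, ← WithLp.toLp_add, ← WithLp.toLp_smul,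
      vecMulVec_sub_mulVec_add_smul, smul_smul]

end AlmostSureConvergence

/-- Almost sure convergence of linear TD with i.i.d. samples: at each step an
independent pair `(S_{t,0}, S_{t,1})` is drawn with `S_{t,0} ~ d_π` and
`S_{t,1} ~ P_π(S_{t,0}, ·)`; the probability space is the i.i.d. product measure,
characterized here by its cylinder probabilities. Under Robbins–Monro step sizes,
the iterates converge almost surely to the TD fixed point `w* = −A⁻¹ b`. -/
theorem ae_tendsto_of_linearTD_iid
    {S : Type*} [Fintype S] [Nonempty S] [DecidableEq S]
    [MeasurableSpace S] [MeasurableSingletonClass S] {K : ℕ}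
    -- the transition matrix: row stochastic, irreducible, aperiodic
    (P : Matrix S S ℝ)
    (hnonneg : ∀ i j, 0 ≤ P i j)
    (hrowsum : ∀ i, ∑ j, P i j = 1)
    (hirr : ∀ i j, ∃ n : ℕ, 0 < (P ^ n) i j)
    (haper : ∀ i, ∀ e : ℕ, (∀ n ∈ returnTimes P i, e ∣ n) → e = 1)
    -- the stationary distribution
    (d : S → ℝ) (hdnonneg : ∀ s, 0 ≤ d s) (hdsum : ∑ s, d s = 1)
    (hdstat : ∀ j, ∑ i, d i * P i j = d j)
    -- features with full column rank, rewards, discount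
    (feat : S → Fin K → ℝ)
    (X : Matrix S (Fin K) ℝ) (hXfeat : X = Matrix.of feat)
    (hX : Function.Injective X.mulVec)
    (r : S → ℝ)
    (γ : ℝ) (hγ0 : 0 ≤ γ) (hγ1 : γ < 1)
    -- Robbins–Monro step sizes
    (α : ℕ → ℝ) (hαpos : ∀ t, 0 < α t)
    (hαsum : Tendsto (fun n => ∑ k ∈ Finset.range n, α k) atTop atTop)
    (hαsqsum : Summable (fun t => (α t) ^ 2))
    -- the i.i.d. product measure over pairs, characterized by cylinder probabilities
    (μ : Measure (ℕ → S × S)) [IsProbabilityMeasure μ]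
    (hμ : ∀ (n : ℕ) (ys : ℕ → S × S),
      μ {ω | ∀ i ≤ n, ω i = ys i} =
        ENNReal.ofReal (∏ i ∈ Finset.range (n + 1), d (ys i).1 * P (ys i).1 (ys i).2))
    -- the linear TD iterates driven by the i.i.d. samples
    (w₀ : Fin K → ℝ) (w : ℕ → (ℕ → S × S) → (Fin K → ℝ))
    (hw0 : ∀ ω, w 0 ω = w₀)
    (hwstep : ∀ t ω, w (t + 1) ω = w t ω +
      (α t * (r (ω t).1 + γ * (∑ k, feat (ω t).2 k * w t ω k)
        - ∑ k, feat (ω t).1 k * w t ω k)) • feat (ω t).1)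
    -- the TD fixed point
    (A : Matrix (Fin K) (Fin K) ℝ)
    (hA : A = Xᵀ * Matrix.diagonal d * (γ • P - 1) * X)
    (b : Fin K → ℝ) (hb : b = (Xᵀ * Matrix.diagonal d).mulVec r)
    (wstar : Fin K → ℝ) (hwstar : wstar = -(A⁻¹.mulVec b)) :
    ∀ᵐ ω ∂μ, Tendsto (fun t => w t ω) atTop (nhds wstar) := by
  subst hXfeat hA hb hwstar
  have hP : P ∈ rowStochastic ℝ S := mem_rowStochastic_iff_sum.2 ⟨hnonneg, hrowsum⟩
  have hd : d ᵥ* P = d := funext hdstat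
  have hp : ∀ y : S × S, 0 ≤ d y.1 * P y.1 y.2 := fun y => mul_nonneg (hdnonneg _) (hnonneg _ _)
  exact ae_tendsto_of_linearTD_iid_general hP
    (stationary_pos_of_irreducible hP hirr hdnonneg hdsum hd) hd hX r (abs_lt.2 ⟨by linarith, hγ1⟩)
    (fun t => (hαpos t).le)
    ((not_summable_iff_tendsto_nat_atTop_of_nonneg fun t => (hαpos t).le).2 hαsum) hαsqsum
    measurable_pi_apply (iIndepFun_eval_of_cylinder hp hμ)
    (measureReal_eval_preimage_singleton_of_cylinder hp hμ) hw0 hwstep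
end

section
/- (Anchor sequence for polynomial step sizes.) Let ν ∈ (2/3, 1) and α_t = 1/(t+2)^ν for t ∈ ℕ. Then there exist a constant C ≥ 0 and a strictly increasing sequence of natural numbers {t_m} with t_0 = 0 and t_m → ∞ such that, setting β_m := ∑_{t = t_m}^{t_{m+1} − 1} α_t, the sequence {β_m} satisfies the Robbins–Monro condition (β_m > 0, ∑_m β_m = ∞, ∑_m β_m² < ∞) and moreover α_{t_m} ≤ C·β_m² for all m. -/
open Finset Filter

/-!
End each block as soon as its sum reaches the square root of its first step size. Then
`α_{t_m} ≤ β_m²`, and the overshoot is at most one step, so `β_m² = O(α_{t_m})` and only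
`∑ α_{t_m} < ∞` remains. As `α` is antitone,
`α_{t_{m+1}} ≤ √α_{t_{m+1}} √α_{t_m} ≤ √α_{t_{m+1}} β_m ≤ ∑_{t in block m} α_t^(3/2)`,
which is summable over `m` whenever `∑ α_t^(3/2) < ∞`; for `α_t = (t + 2)^(-ν)` this is `ν > 2/3`.
-/

/-- The sum of `f` over the block `[t_m, t_{m+1})` cut out by the anchors `tm`; for the step sizes
`f = α` this is `β_m`. -/
def blockSum {M : Type*} [AddCommMonoid M] (f : ℕ → M) (tm : ℕ → ℕ) (m : ℕ) : M :=
  ∑ t ∈ Ico (tm m) (tm (m + 1)), f t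

/-- The Robbins–Monro condition on a step-size sequence. Divergence of the series is encoded as
divergence of its partial sums to `+∞`. -/
structure RobbinsMonro (β : ℕ → ℝ) : Prop where
  pos : ∀ m, 0 < β m
  tendsto_sum : Tendsto (fun M => ∑ m ∈ range M, β m) atTop atTop
  summable_sq : Summable fun m => β m ^ 2

/-- Anchors starting at `0` whose blocks are extended until their sum reaches the square root of
their first step size. That a block stops there is recorded only through the resulting bound on
its sum, which exceeds the threshold by at most the first step size. -/
structure IsGreedyAnchor (α : ℕ → ℝ) (tm : ℕ → ℕ) : Prop where
  zero : tm 0 = 0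
  strictMono : StrictMono tm
  sqrt_le_blockSum : ∀ m, √(α (tm m)) ≤ blockSum α tm m
  blockSum_le : ∀ m, blockSum α tm m ≤ √(α (tm m)) + α (tm m)

section BlockSum

variable {tm : ℕ → ℕ}

lemma sum_range_blockSum {M : Type*} [AddCommMonoid M] (f : ℕ → M) (h0 : tm 0 = 0)
    (hmono : Monotone tm) (n : ℕ) :
    ∑ m ∈ range n, blockSum f tm m = ∑ t ∈ range (tm n), f t := by
  induction n with
  | zero => simp [h0]
  | succ n ih => rw [sum_range_succ, ih, blockSum, sum_range_add_sum_Ico _ (hmono n.le_succ)]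

lemma summable_blockSum {f : ℕ → ℝ} (hf : ∀ t, 0 ≤ f t) (hsum : Summable f) (h0 : tm 0 = 0)
    (hmono : Monotone tm) : Summable (blockSum f tm) :=
  summable_of_sum_range_le (fun _ => sum_nonneg fun t _ => hf t) fun n =>
    (sum_range_blockSum f h0 hmono n).trans_le (hsum.sum_le_tsum _ fun t _ => hf t)

lemma tendsto_sum_blockSum {f : ℕ → ℝ} (hf : ∀ t, 0 ≤ f t) (hdiv : ¬ Summable f) (h0 : tm 0 = 0)
    (hmono : StrictMono tm) :
    Tendsto (fun n => ∑ m ∈ range n, blockSum f tm m) atTop atTop := by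
  simp only [sum_range_blockSum f h0 hmono.monotone]
  exact ((not_summable_iff_tendsto_nat_atTop_of_nonneg hf).1 hdiv).comp hmono.tendsto_atTop

end BlockSum

lemma exists_sum_Ico_lt_le_sum_Ico_succ {f : ℕ → ℝ} (hf : ∀ t, 0 ≤ f t) (hdiv : ¬ Summable f)
    (n : ℕ) {c : ℝ} (hc : 0 < c) :
    ∃ k ≥ n, ∑ t ∈ Ico n k, f t < c ∧ c ≤ ∑ t ∈ Ico n (k + 1), f t := by
  have hex : ∃ j, c ≤ ∑ t ∈ Ico n (n + j), f t := by
    simp only [sum_Ico_eq_sum_range, Nat.add_sub_cancel, Nat.add_comm n]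
    have hdiv_tail : ¬ Summable fun t => f (t + n) := mt (summable_nat_add_iff n).1 hdiv
    exact (((not_summable_iff_tendsto_nat_atTop_of_nonneg fun t => hf (t + n)).1
      hdiv_tail).eventually_ge_atTop c).exists
  classical
  obtain ⟨j, hj⟩ : ∃ j, Nat.find hex = j + 1 :=
    Nat.exists_eq_add_one.2 <| (Nat.find_pos hex).2 <| by simpa using hc
  refine ⟨n + j, n.le_add_right j, not_le.1 (Nat.find_min hex (by omega)), ?_⟩
  simpa only [hj, Nat.add_assoc] using Nat.find_spec hex

section Greedy

variable {α : ℕ → ℝ} {tm : ℕ → ℕ}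

lemma exists_block_sum_between (hpos : ∀ t, 0 < α t) (hanti : Antitone α) (hdiv : ¬ Summable α)
    (n : ℕ) :
    ∃ k > n, √(α n) ≤ ∑ t ∈ Ico n k, α t ∧ ∑ t ∈ Ico n k, α t ≤ √(α n) + α n := by
  obtain ⟨k, hnk, hlt, hle⟩ := exists_sum_Ico_lt_le_sum_Ico_succ (fun t => (hpos t).le) hdiv n
    (Real.sqrt_pos.2 (hpos n))
  refine ⟨k + 1, Nat.lt_succ_of_le hnk, hle, ?_⟩
  rw [sum_Ico_succ_top hnk]
  exact add_le_add hlt.le (hanti hnk)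

lemma exists_isGreedyAnchor (hpos : ∀ t, 0 < α t) (hanti : Antitone α) (hdiv : ¬ Summable α) :
    ∃ tm, IsGreedyAnchor α tm := by
  choose blockEnd hlt hlower hupper using exists_block_sum_between hpos hanti hdiv
  have hsucc (m : ℕ) : blockEnd^[m + 1] 0 = blockEnd (blockEnd^[m] 0) :=
    Function.iterate_succ_apply' blockEnd m 0
  refine ⟨fun m => blockEnd^[m] 0, rfl, strictMono_nat_of_lt_succ fun m => ?_,
    fun m => ?_, fun m => ?_⟩
  · simpa only [hsucc] using hlt _
  · simpa only [blockSum, hsucc] using hlower _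
  · simpa only [blockSum, hsucc] using hupper _

lemma sqrt_mul_blockSum_le (hα : ∀ t, 0 ≤ α t) (hanti : Antitone α) (m : ℕ) :
    √(α (tm (m + 1))) * blockSum α tm m ≤ blockSum (fun t => α t ^ (3 / 2 : ℝ)) tm m := by
  rw [blockSum, mul_sum]
  refine sum_le_sum fun t ht => ?_
  have hle : α (tm (m + 1)) ≤ α t := hanti (mem_Ico.1 ht).2.le
  calc √(α (tm (m + 1))) * α t ≤ √(α t) * α t :=
        mul_le_mul_of_nonneg_right (Real.sqrt_le_sqrt hle) (hα t)
    _ = α t ^ (1 / 2 + 1 : ℝ) := by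
        rw [Real.rpow_add_one' (hα t) (by norm_num), Real.sqrt_eq_rpow]
    _ = α t ^ (3 / 2 : ℝ) := by norm_num

namespace IsGreedyAnchor

lemma anchor_le_blockSum_sq (h : IsGreedyAnchor α tm) (m : ℕ) :
    α (tm m) ≤ blockSum α tm m ^ 2 :=
  (Real.sqrt_le_iff.1 (h.sqrt_le_blockSum m)).2

lemma anchor_succ_le_blockSum (h : IsGreedyAnchor α tm) (hα : ∀ t, 0 ≤ α t) (hanti : Antitone α)
    (m : ℕ) : α (tm (m + 1)) ≤ blockSum (fun t => α t ^ (3 / 2 : ℝ)) tm m :=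
  calc α (tm (m + 1)) = √(α (tm (m + 1))) * √(α (tm (m + 1))) := (Real.mul_self_sqrt (hα _)).symm
    _ ≤ √(α (tm (m + 1))) * √(α (tm m)) := by
        gcongr
        exact hanti (h.strictMono.monotone m.le_succ)
    _ ≤ √(α (tm (m + 1))) * blockSum α tm m := by
        gcongr
        exact h.sqrt_le_blockSum m
    _ ≤ blockSum (fun t => α t ^ (3 / 2 : ℝ)) tm m := sqrt_mul_blockSum_le hα hanti m

lemma summable_anchor (h : IsGreedyAnchor α tm) (hα : ∀ t, 0 ≤ α t) (hanti : Antitone α)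
    (hsum : Summable fun t => α t ^ (3 / 2 : ℝ)) : Summable fun m => α (tm m) :=
  (summable_nat_add_iff 1).1 <| .of_nonneg_of_le (fun _ => hα _)
    (h.anchor_succ_le_blockSum hα hanti)
    (summable_blockSum (fun t => Real.rpow_nonneg (hα t) _) hsum h.zero h.strictMono.monotone)

lemma blockSum_sq_le (h : IsGreedyAnchor α tm) (hα : ∀ t, 0 ≤ α t) (hanti : Antitone α) (m : ℕ) :
    blockSum α tm m ^ 2 ≤ (1 + √(α 0)) ^ 2 * α (tm m) := by
  have hroot : √(α (tm m)) ≤ √(α 0) := Real.sqrt_le_sqrt (hanti (tm m).zero_le)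
  have hsq : √(α (tm m)) ^ 2 = α (tm m) := Real.sq_sqrt (hα _)
  have hβ : 0 ≤ blockSum α tm m := (Real.sqrt_nonneg _).trans (h.sqrt_le_blockSum m)
  calc blockSum α tm m ^ 2 ≤ (√(α (tm m)) + α (tm m)) ^ 2 := by
        gcongr
        exact h.blockSum_le m
    _ = (1 + √(α (tm m))) ^ 2 * α (tm m) := by
        rw [← hsq, Real.sqrt_sq (Real.sqrt_nonneg _)]
        ring
    _ ≤ (1 + √(α 0)) ^ 2 * α (tm m) := by
        gcongr
        exact hα _

lemma robbinsMonro (h : IsGreedyAnchor α tm) (hpos : ∀ t, 0 < α t) (hanti : Antitone α)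
    (hdiv : ¬ Summable α) (hsum : Summable fun t => α t ^ (3 / 2 : ℝ)) :
    RobbinsMonro (blockSum α tm) where
  pos m := (Real.sqrt_pos.2 (hpos _)).trans_le (h.sqrt_le_blockSum m)
  tendsto_sum := tendsto_sum_blockSum (fun t => (hpos t).le) hdiv h.zero h.strictMono
  summable_sq := .of_nonneg_of_le (fun _ => sq_nonneg _)
    (h.blockSum_sq_le (fun t => (hpos t).le) hanti)
    ((h.summable_anchor (fun t => (hpos t).le) hanti hsum).mul_left _)

end IsGreedyAnchor

theorem anchor_sequence_for_poly_stepsizes_general (hpos : ∀ t, 0 < α t) (hanti : Antitone α)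
    (hdiv : ¬ Summable α) (hsum : Summable fun t => α t ^ (3 / 2 : ℝ)) :
    ∃ tm : ℕ → ℕ, StrictMono tm ∧ tm 0 = 0 ∧ RobbinsMonro (blockSum α tm) ∧
      ∀ m, α (tm m) ≤ blockSum α tm m ^ 2 := by
  obtain ⟨tm, htm⟩ := exists_isGreedyAnchor hpos hanti hdiv
  exact ⟨tm, htm.strictMono, htm.zero, htm.robbinsMonro hpos hanti hdiv hsum,
    htm.anchor_le_blockSum_sq⟩

end Greedy

section PolynomialStepsizes

variable {c ν : ℝ}

lemma antitone_one_div_nat_add_rpow (hc : 0 < c) (hν : 0 ≤ ν) :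
    Antitone fun t : ℕ => 1 / ((t : ℝ) + c) ^ ν := fun s t hst => by
  dsimp only
  gcongr

lemma summable_one_div_nat_add_rpow_iff (hc : 0 < c) :
    Summable (fun t : ℕ => 1 / ((t : ℝ) + c) ^ ν) ↔ 1 < ν := by
  rw [← Real.summable_one_div_nat_add_rpow c ν]
  refine summable_congr fun t => ?_
  rw [abs_of_pos (by positivity)]

lemma summable_one_div_nat_add_rpow_rpow_iff {p : ℝ} (hc : 0 < c) :
    Summable (fun t : ℕ => (1 / ((t : ℝ) + c) ^ ν) ^ p) ↔ 1 < ν * p := by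
  rw [← summable_one_div_nat_add_rpow_iff hc]
  refine summable_congr fun t => ?_
  rw [Real.div_rpow zero_le_one (by positivity), Real.one_rpow, Real.rpow_mul (by positivity)]

end PolynomialStepsizes

/-- Anchor sequence for polynomial step sizes: for `α_t = 1/(t+2)^ν` with
`ν ∈ (2/3, 1)`, there is a strictly increasing anchor sequence `t_m` (with `t_0 = 0`,
`t_m → ∞`) whose block step-size sums `β_m = ∑_{t = t_m}^{t_{m+1}−1} α_t` satisfy the
Robbins–Monro condition and additionally `α_{t_m} ≤ C β_m²` for some `C ≥ 0`. -/
theorem anchor_sequence_for_poly_stepsizes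
    (ν : ℝ) (hν : ν ∈ Set.Ioo (2 / 3 : ℝ) 1)
    (α : ℕ → ℝ) (hα : α = fun t : ℕ => 1 / ((t : ℝ) + 2) ^ ν) :
    ∃ (C : ℝ) (tm : ℕ → ℕ), 0 ≤ C ∧
      StrictMono tm ∧ tm 0 = 0 ∧ Tendsto tm atTop atTop ∧
      (∀ m, 0 < ∑ t ∈ Finset.Ico (tm m) (tm (m + 1)), α t) ∧
      Tendsto (fun M => ∑ m ∈ Finset.range M,
        ∑ t ∈ Finset.Ico (tm m) (tm (m + 1)), α t) atTop atTop ∧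
      Summable (fun m => (∑ t ∈ Finset.Ico (tm m) (tm (m + 1)), α t) ^ 2) ∧
      ∀ m, α (tm m) ≤ C * (∑ t ∈ Finset.Ico (tm m) (tm (m + 1)), α t) ^ 2 := by
  obtain ⟨hν_lower, hν_upper⟩ := hν
  subst hα
  obtain ⟨tm, hmono, hzero, hβ, hle⟩ := anchor_sequence_for_poly_stepsizes_general
    (fun t => by positivity) (antitone_one_div_nat_add_rpow (ν := ν) two_pos (by linarith))
    ((summable_one_div_nat_add_rpow_iff two_pos).not.2 hν_upper.not_gt)
    ((summable_one_div_nat_add_rpow_rpow_iff two_pos).2 (by linarith))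
  exact ⟨1, tm, zero_le_one, hmono, hzero, hmono.tendsto_atTop, hβ.pos, hβ.tendsto_sum,
    hβ.summable_sq, fun m => (hle m).trans_eq (one_mul _).symm⟩
end

section
/- Consider iterates w_{t+1} = w_t + α_t·G(w_t, Y_{t+1}) in ℝᵈ, where G is Lipschitz in its first argument uniformly in the second and satisfies a linear growth bound ‖G(w, y)‖ ≤ L(1 + ‖w‖) for all w, y, the step sizes satisfy α_t > 0 and α_t → 0, and {t_m} is a strictly increasing anchor sequence with t_0 = 0 and block step-size sums β_m := ∑_{t=t_m}^{t_{m+1}−1} α_t. If β_m ≤ B for all m, β_m → 0, and the skeleton sequence converges, w_{t_m}(ω) → w* as m → ∞, then the full sequence converges: w_t(ω) → w* as t → ∞, for the same ω. In particular the set of sample paths on which the skeleton converges is contained (up to a null set) in the set on which the full iterate sequence converges. -/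
open Finset Filter

/-!
Linear growth makes `G` bounded by some constant `C` near `w*`. As long as the iterates stay near
`w*`, they drift by at most `C * β_m` within the `m`-th block, so once the anchor `w_{t_m}` is close
to `w*` and `β_m` is small they cannot leave the neighbourhood before the next anchor. This
confinement replaces the global Gronwall estimate.
-/

section Skeleton

variable {X : Type*} [PseudoMetricSpace X] {u : ℕ → X} {x : X} {a : ℕ → ℝ} {r : ℝ}

lemma dist_le_add_sum_Ico_of_dist_step_le (ha : ∀ t, 0 ≤ a t)
    (hstep : ∀ t, dist (u t) x < r → dist (u (t + 1)) (u t) ≤ a t) {s t : ℕ} (hst : s ≤ t)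
    (h : dist (u s) x + ∑ k ∈ Ico s t, a k < r) :
    dist (u t) x ≤ dist (u s) x + ∑ k ∈ Ico s t, a k := by
  induction t, hst using Nat.le_induction with
  | base => simp
  | succ t hst ih =>
    rw [sum_Ico_succ_top hst] at h ⊢
    have hsum : dist (u s) x + ∑ k ∈ Ico s t, a k < r := by linarith [ha t]
    have hdist := ih hsum
    calc dist (u (t + 1)) x
        ≤ dist (u (t + 1)) (u t) + dist (u t) x := dist_triangle _ _ _
      _ ≤ a t + (dist (u s) x + ∑ k ∈ Ico s t, a k) :=
          add_le_add (hstep t (hdist.trans_lt hsum)) hdist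
      _ = dist (u s) x + (∑ k ∈ Ico s t, a k + a t) := by ring

lemma exists_ge_le_and_lt_succ_of_tendsto_atTop {β : Type*} [LinearOrder β] [NoMaxOrder β]
    {f : ℕ → β} (hf : Tendsto f atTop atTop) {M : ℕ} {b : β} (hb : f M ≤ b) :
    ∃ m ≥ M, f m ≤ b ∧ b < f (m + 1) := by
  by_contra! hstay
  have hbdd : ∀ m ≥ M, f m ≤ b := Nat.le_induction hb hstay
  obtain ⟨m, hbm, hMm⟩ := ((hf.eventually_gt_atTop b).and (eventually_ge_atTop M)).exists
  exact (hbdd m hMm).not_gt hbm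

theorem tendsto_of_tendsto_skeleton_of_tendsto_sum_Ico (hr : 0 < r) (ha : ∀ t, 0 ≤ a t)
    (hstep : ∀ t, dist (u t) x < r → dist (u (t + 1)) (u t) ≤ a t)
    {τ : ℕ → ℕ} (hτ : Tendsto τ atTop atTop)
    (hsum : Tendsto (fun m => ∑ t ∈ Ico (τ m) (τ (m + 1)), a t) atTop (nhds 0))
    (hskel : Tendsto (fun m => u (τ m)) atTop (nhds x)) :
    Tendsto u atTop (nhds x) := by
  rw [Metric.tendsto_atTop]
  intro ε hε
  have hbound : Tendsto (fun m => dist (u (τ m)) x + ∑ t ∈ Ico (τ m) (τ (m + 1)), a t)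
      atTop (nhds 0) := by
    simpa only [add_zero] using (tendsto_iff_dist_tendsto_zero.1 hskel).add hsum
  obtain ⟨M, hM⟩ := eventually_atTop.1 (hbound.eventually_lt_const (lt_min hε hr))
  refine ⟨τ M, fun t ht => ?_⟩
  obtain ⟨m, hMm, hmt, htm⟩ := exists_ge_le_and_lt_succ_of_tendsto_atTop hτ ht
  have hpartial : ∑ k ∈ Ico (τ m) t, a k ≤ ∑ k ∈ Ico (τ m) (τ (m + 1)), a k :=
    sum_le_sum_of_subset_of_nonneg (Ico_subset_Ico_right htm.le) fun k _ _ => ha k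
  have hsmall : dist (u (τ m)) x + ∑ k ∈ Ico (τ m) t, a k < min ε r :=
    (add_le_add_right hpartial _).trans_lt (hM m hMm)
  exact (dist_le_add_sum_Ico_of_dist_step_le ha hstep hmt
    (hsmall.trans_le (min_le_right _ _))).trans_lt (hsmall.trans_le (min_le_left _ _))

end Skeleton

lemma exists_eventually_forall_le_of_le_continuousAt {X ι : Type*} [TopologicalSpace X]
    {f : X → ι → ℝ} {b : X → ℝ} {x : X} (hb : ContinuousAt b x) (hf : ∀ v i, f v i ≤ b v) :
    ∃ C, ∀ᶠ v in nhds x, ∀ i, f v i ≤ C :=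
  ⟨b x + 1, (hb.eventually_lt_const (lt_add_one _)).mono fun v hv i => (hf v i).trans hv.le⟩

theorem tendsto_of_skeleton_tendsto_general {E 𝒴 : Type*} [SeminormedAddCommGroup E]
    [NormedSpace ℝ E] {G : E → 𝒴 → E} {wstar : E}
    (hG : ∃ C, ∀ᶠ v in nhds wstar, ∀ y, ‖G v y‖ ≤ C)
    {α : ℕ → ℝ} (hα : ∀ t, 0 ≤ α t) {y : ℕ → 𝒴} {w : ℕ → E}
    (hw : ∀ t, w (t + 1) = w t + α t • G (w t) (y (t + 1)))
    {τ : ℕ → ℕ} (hτ : Tendsto τ atTop atTop)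
    (hβ : Tendsto (fun m => ∑ t ∈ Ico (τ m) (τ (m + 1)), α t) atTop (nhds 0))
    (hskel : Tendsto (fun m => w (τ m)) atTop (nhds wstar)) :
    Tendsto w atTop (nhds wstar) := by
  obtain ⟨C, hC⟩ := hG
  have hC0 : 0 ≤ C := (norm_nonneg _).trans (hC.self_of_nhds (y 0))
  obtain ⟨r, hr, hball⟩ := Metric.eventually_nhds_iff.1 hC
  have hstep : ∀ t, dist (w t) wstar < r → dist (w (t + 1)) (w t) ≤ α t * C := fun t ht => by
    rw [hw, dist_self_add_left, norm_smul, Real.norm_of_nonneg (hα t)]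
    exact mul_le_mul_of_nonneg_left (hball ht _) (hα t)
  have hsum : Tendsto (fun m => ∑ t ∈ Ico (τ m) (τ (m + 1)), α t * C) atTop (nhds 0) := by
    simpa only [sum_mul, zero_mul] using hβ.mul_const C
  exact tendsto_of_tendsto_skeleton_of_tendsto_sum_Ico hr (fun t => mul_nonneg (hα t) hC0)
    hstep hτ hsum hskel

/-- Skeleton-to-full-sequence convergence: for pathwise iterates
`w_{t+1}(ω) = w_t(ω) + α_t G(w_t(ω), Y_{t+1}(ω))` where `G` is Lipschitz in its first
argument uniformly in the second and has linear growth, with positive vanishing step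
sizes and anchors whose block sums `β_m` are bounded and vanish, convergence of the
skeleton sequence `w_{t_m}(ω) → w*` implies convergence of the full sequence
`w_t(ω) → w*`, for the same sample path `ω`. -/
theorem tendsto_of_skeleton_tendsto
    {Ω 𝒴 : Type*} {d : ℕ}
    (G : EuclideanSpace ℝ (Fin d) → 𝒴 → EuclideanSpace ℝ (Fin d))
    (L : NNReal)
    (hLip : ∀ y, LipschitzWith L (fun v => G v y))
    (hGrow : ∀ v y, ‖G v y‖ ≤ L * (1 + ‖v‖))
    (α : ℕ → ℝ) (hαpos : ∀ t, 0 < α t) (hα0 : Tendsto α atTop (nhds 0))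
    (Yseq : ℕ → Ω → 𝒴)
    (w : ℕ → Ω → EuclideanSpace ℝ (Fin d))
    (hwstep : ∀ t ω, w (t + 1) ω = w t ω + α t • G (w t ω) (Yseq (t + 1) ω))
    (tm : ℕ → ℕ) (htm : StrictMono tm) (htm0 : tm 0 = 0)
    (B : ℝ)
    (hβbdd : ∀ m, ∑ t ∈ Finset.Ico (tm m) (tm (m + 1)), α t ≤ B)
    (hβ0 : Tendsto (fun m => ∑ t ∈ Finset.Ico (tm m) (tm (m + 1)), α t)
      atTop (nhds 0))
    (wstar : EuclideanSpace ℝ (Fin d)) :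
    ∀ ω : Ω, Tendsto (fun m => w (tm m) ω) atTop (nhds wstar) →
      Tendsto (fun t => w t ω) atTop (nhds wstar) :=
  fun ω => tendsto_of_skeleton_tendsto_general (y := (Yseq · ω)) (w := (w · ω))
    (exists_eventually_forall_le_of_le_continuousAt (by fun_prop) hGrow)
    (fun t => (hαpos t).le) (hwstep · ω) htm.tendsto_atTop hβ0
end
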